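/- (Theorem 11, Blind IA, group-G₁ femtocell projection.) Let T, N, K, M, p be positive integers. Let v₁,…,v_K be 1×T complex row vectors (macrocell beamforming vectors, V_i = (a/√N)(v_iᵀ ⊗ I_N)); let ξ₁,…,ξ_{T−1} be 1×T row vectors, r an N×p complex matrix, q₁,…,q_{T−1} be p×M complex matrices, and V^f = (b₁/√N)·Σ_{i=1}^{T−1} (ξ_iᵀ ⊗ (r·q_i)); let v_g be a 1×T row vector, e₂ an N×1 column vector, and V^g = (b₂/√N)·(v_gᵀ ⊗ e₂). Let h_f, h_A, h_g be N×N complex channel matrices, γ_f, γ_A, γ_g > 0 reals, w a 1×T complex row vector and W an M×N complex matrix. Assume w·v_iᵀ = 0 for all i ∈ {1,…,K} and W·h_g·e₂ = 0. Let U ∈ ℂ^M, u₁,…,u_K ∈ ℂ^N, U_g ∈ ℂ, Z ∈ ℂ^{NT}, and define y = √γ_f·(I_T ⊗ h_f)·V^f·U + √γ_A·(I_T ⊗ h_A)·Σ_{i=1}^{K} V_i·u_i + √γ_g·(I_T ⊗ h_g)·V^g·U_g + Z, and P = w ⊗ W. Then P·y = (b₁/√N)·(√γ_f·W·h_f·r)·(Σ_{i=1}^{T−1}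 (w·ξ_iᵀ)·q_i)·U + P·Z. -/

import Mathlib

open Matrix
open scoped Kronecker

/-!
By the mixed-product rule, `w ⊗ W` applied after the channel `I ⊗ h` sends a beam `x ⊗ B` to
`(w x) ⊗ (W h B)`. The macrocell beams die in the first factor and the group-G₂ beam in the second,
while for the desired beams the first factor `w ξᵢᵀ` is a scalar that can be moved onto `qᵢ`.
-/

section Kronecker

variable {R l l' m m' n n' o ι κ : Type*} [CommSemiring R]

theorem kronecker_sum (s : Finset κ) (A : Matrix l m R) (B : κ → Matrix l' m' R) :
    A ⊗ₖ (∑ i ∈ s, B i) = ∑ i ∈ s, A ⊗ₖ B i :=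
  map_sum (kroneckerBilinear (R := R) A) B s

theorem kronecker_eq_one_kronecker_smul [Unique ι] [DecidableEq ι]
    (A : Matrix ι ι R) (B : Matrix l m R) :
    A ⊗ₖ B = (1 : Matrix ι ι R) ⊗ₖ (A default default • B) := by
  ext ⟨i, j⟩ ⟨i', j'⟩
  simp [Unique.eq_default i, Unique.eq_default i']

variable [Fintype m] [DecidableEq m] [Fintype m'] [Fintype n']

theorem kronecker_mul_one_kronecker_mul_kronecker
    (w : Matrix l m R) (W : Matrix l' m' R) (h : Matrix m' n' R)
    (A : Matrix m n R) (B : Matrix n' o R) :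
    (w ⊗ₖ W) * (((1 : Matrix m m R) ⊗ₖ h) * (A ⊗ₖ B)) = (w * A) ⊗ₖ (W * h * B) := by
  rw [← mul_kronecker_mul, ← mul_kronecker_mul, Matrix.one_mul, Matrix.mul_assoc]

theorem kronecker_mul_one_kronecker_mul_sum_kronecker [Unique ι] [DecidableEq ι]
    [Fintype n] [Fintype κ]
    (w : Matrix ι m R) (W : Matrix l' m' R) (h : Matrix m' n' R)
    (x : κ → Matrix m ι R) (r : Matrix n' n R) (q : κ → Matrix n o R) :
    (w ⊗ₖ W) * (((1 : Matrix m m R) ⊗ₖ h) * ∑ i, x i ⊗ₖ (r * q i)) =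
      (1 : Matrix ι ι R) ⊗ₖ (W * h * r * ∑ i, (w * x i) default default • q i) := by
  simp only [Matrix.mul_sum, kronecker_sum]
  refine Finset.sum_congr rfl fun i _ => ?_
  rw [kronecker_mul_one_kronecker_mul_kronecker, kronecker_eq_one_kronecker_smul,
    Matrix.mul_smul, Matrix.mul_assoc _ r]

end Kronecker

theorem blindIA_groupG1_femtocell_projection_general
    {R τ ν νf νA νg μ μ' π ι κ σ η ζ ω : Type*} [CommSemiring R]
    [Fintype τ] [DecidableEq τ] [Fintype ν] [Fintype νf] [Fintype νA]
    [Fintype νg] [Fintype μ'] [Fintype π] [Fintype ι] [Unique ι] [DecidableEq ι]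
    [Fintype κ] [Fintype σ] [Fintype η] [Fintype ζ]
    (α β₁ β₂ cf cA cg : R)
    (v : κ → Matrix ι τ R) (B : κ → Matrix νA η R)
    (ξ : σ → Matrix ι τ R) (r : Matrix νf π R) (q : σ → Matrix π μ' R)
    (vg : Matrix ι τ R) (e₂ : Matrix νg ζ R)
    (hf : Matrix ν νf R) (hA : Matrix ν νA R) (hg : Matrix ν νg R)
    (w : Matrix ι τ R) (W : Matrix μ ν R)
    (hwv : ∀ i, w * (v i)ᵀ = 0) (hWg : W * hg * e₂ = 0)
    (U : Matrix (ι × μ') ω R) (u : κ → Matrix (ι × η) ω R) (Ug : Matrix (ι × ζ) ω R)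
    (Z : Matrix (τ × ν) ω R) :
    (w ⊗ₖ W) *
        (cf • (((1 : Matrix τ τ R) ⊗ₖ hf) * ((β₁ • ∑ i, (ξ i)ᵀ ⊗ₖ (r * q i)) * U))
          + cA • (((1 : Matrix τ τ R) ⊗ₖ hA) * ∑ i, (α • ((v i)ᵀ ⊗ₖ B i)) * u i)
          + cg • (((1 : Matrix τ τ R) ⊗ₖ hg) * ((β₂ • (vgᵀ ⊗ₖ e₂)) * Ug))
          + Z) =
      β₁ • (((1 : Matrix ι ι R) ⊗ₖ
        ((cf • (W * hf * r)) * ∑ i, (w * (ξ i)ᵀ) default default • q i)) * U)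
        + (w ⊗ₖ W) * Z := by
  have desired :
      (w ⊗ₖ W) * (((1 : Matrix τ τ R) ⊗ₖ hf) * ((β₁ • ∑ i, (ξ i)ᵀ ⊗ₖ (r * q i)) * U)) =
        β₁ • (((1 : Matrix ι ι R) ⊗ₖ
          (W * hf * r * ∑ i, (w * (ξ i)ᵀ) default default • q i)) * U) := by
    rw [← Matrix.mul_assoc (1 ⊗ₖ hf), ← Matrix.mul_assoc, Matrix.mul_smul, Matrix.mul_smul,
      kronecker_mul_one_kronecker_mul_sum_kronecker, Matrix.smul_mul]
  have macrocell :
      (w ⊗ₖ W) * (((1 : Matrix τ τ R) ⊗ₖ hA) * ∑ i, (α • ((v i)ᵀ ⊗ₖ B i)) * u i) = 0 := by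
    rw [Matrix.mul_sum, Matrix.mul_sum]
    refine Finset.sum_eq_zero fun i _ => ?_
    rw [← Matrix.mul_assoc (1 ⊗ₖ hA), ← Matrix.mul_assoc, Matrix.mul_smul, Matrix.mul_smul,
      kronecker_mul_one_kronecker_mul_kronecker, hwv, zero_kronecker, smul_zero, Matrix.zero_mul]
  have groupG2 : (w ⊗ₖ W) * (((1 : Matrix τ τ R) ⊗ₖ hg) * ((β₂ • (vgᵀ ⊗ₖ e₂)) * Ug)) = 0 := by
    rw [← Matrix.mul_assoc (1 ⊗ₖ hg), ← Matrix.mul_assoc, Matrix.mul_smul, Matrix.mul_smul,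
      kronecker_mul_one_kronecker_mul_kronecker, hWg, kronecker_zero, smul_zero, Matrix.zero_mul]
  rw [Matrix.mul_add, Matrix.mul_add, Matrix.mul_add, Matrix.mul_smul, Matrix.mul_smul,
    Matrix.mul_smul, desired, macrocell, groupG2, smul_zero, smul_zero, add_zero, add_zero,
    smul_comm, Matrix.smul_mul, kronecker_smul, Matrix.smul_mul]

/-- Theorem 11, Blind IA, group-G₁ femtocell projection: the projection
`P = w ⊗ W` removes the macrocell interference and the group-G₂ femtocell
interference at a group-G₁ femtocell receiver, leaving the effective channel
`(b₁/√N)·(√γ_f·W·h_f·r)·(Σ_i (w·ξ_iᵀ)·q_i)` acting on the data `U`. -/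
theorem blindIA_groupG1_femtocell_projection
    (T N K M p : ℕ) (hT : 0 < T) (hN : 0 < N) (hK : 0 < K) (hM : 0 < M) (hp : 0 < p)
    (a b₁ b₂ : ℝ) (hapos : 0 < a) (hb₁ : 0 < b₁) (hb₂ : 0 < b₂)
    (γf γA γg : ℝ) (hγf : 0 < γf) (hγA : 0 < γA) (hγg : 0 < γg)
    -- macrocell beamforming
    (v : Fin K → Matrix (Fin 1) (Fin T) ℂ)
    (V : Fin K → Matrix (Fin T × Fin N) (Fin 1 × Fin N) ℂ)
    (hV : ∀ i, V i = ((a / Real.sqrt N : ℝ) : ℂ) •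
      ((v i)ᵀ ⊗ₖ (1 : Matrix (Fin N) (Fin N) ℂ)))
    -- own (group G₁) beamforming
    (ξ : Fin (T - 1) → Matrix (Fin 1) (Fin T) ℂ)
    (r : Matrix (Fin N) (Fin p) ℂ)
    (q : Fin (T - 1) → Matrix (Fin p) (Fin M) ℂ)
    (Vf : Matrix (Fin T × Fin N) (Fin 1 × Fin M) ℂ)
    (hVf : Vf = ((b₁ / Real.sqrt N : ℝ) : ℂ) •
      ∑ i : Fin (T - 1), ((ξ i)ᵀ ⊗ₖ (r * q i)))
    -- interfering group-G₂ beamforming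
    (vg : Matrix (Fin 1) (Fin T) ℂ)
    (e₂ : Matrix (Fin N) (Fin 1) ℂ)
    (Vg : Matrix (Fin T × Fin N) (Fin 1 × Fin 1) ℂ)
    (hVg : Vg = ((b₂ / Real.sqrt N : ℝ) : ℂ) • (vgᵀ ⊗ₖ e₂))
    -- channels
    (hf hA hg : Matrix (Fin N) (Fin N) ℂ)
    -- projection building blocks and orthogonality assumptions
    (w : Matrix (Fin 1) (Fin T) ℂ) (W : Matrix (Fin M) (Fin N) ℂ)
    (hwv : ∀ i : Fin K, w * (v i)ᵀ = 0)
    (hWg : W * hg * e₂ = 0)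
    -- data, noise, received signal, projection
    (U : Matrix (Fin 1 × Fin M) (Fin 1) ℂ)
    (u : Fin K → Matrix (Fin 1 × Fin N) (Fin 1) ℂ)
    (Ug : Matrix (Fin 1 × Fin 1) (Fin 1) ℂ)
    (Z : Matrix (Fin T × Fin N) (Fin 1) ℂ)
    (y : Matrix (Fin T × Fin N) (Fin 1) ℂ)
    (hy : y = (Real.sqrt γf : ℂ) •
            (((1 : Matrix (Fin T) (Fin T) ℂ) ⊗ₖ hf) * (Vf * U))
        + (Real.sqrt γA : ℂ) •
            (((1 : Matrix (Fin T) (Fin T) ℂ) ⊗ₖ hA) * (∑ i : Fin K, V i * u i))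
        + (Real.sqrt γg : ℂ) •
            (((1 : Matrix (Fin T) (Fin T) ℂ) ⊗ₖ hg) * (Vg * Ug))
        + Z)
    (P : Matrix (Fin 1 × Fin M) (Fin T × Fin N) ℂ)
    (hP : P = w ⊗ₖ W) :
    P * y = ((b₁ / Real.sqrt N : ℝ) : ℂ) •
      (((1 : Matrix (Fin 1) (Fin 1) ℂ) ⊗ₖ
          (((Real.sqrt γf : ℂ) • (W * hf * r)) *
            (∑ i : Fin (T - 1), (w * (ξ i)ᵀ) 0 0 • q i))) * U)
      + P * Z := by
  subst hP hy hVf hVg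
  obtain rfl := funext hV
  exact blindIA_groupG1_femtocell_projection_general _ _ _ _ _ _ v (fun _ => 1) ξ r q vg e₂ hf hA hg
    w W hwv hWg U u Ug Z
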